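/- Let G=(V,E) be a Bonnet-Myers sharp graph of diameter 2 and let x,y∈V with x∼y and d_x<d_y. Then d_y=d_x+1, there is exactly one vertex z∈V with d(x,z)=2, this vertex satisfies d_z=d_x, and |V|=d_x+2 (so y is adjacent to every other vertex of G). -/

import Mathlib

open scoped Classical
open Finset

noncomputable section

/-- The degree of a vertex `x` in the graph `G`. -/
def deg {V : Type*} [Fintype V] (G : SimpleGraph V) (x : V) : ℕ :=
  (Finset.univ.filter (fun y => G.Adj x y)).card

/-- The diameter of `G`: the maximum of the combinatorial distance over all pairs of vertices. -/
def diam {V : Type*} [Fintype V] (G : SimpleGraph V) : ℕ :=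
  Finset.univ.sup (fun xy : V × V => G.dist xy.1 xy.2)

/-- The probability measure `μ_x^p` of the lazy simple random walk at `x` with idleness `p`. -/
def mu {V : Type*} [Fintype V] (G : SimpleGraph V) (p : ℝ) (x : V) : V → ℝ :=
  fun z => if z = x then p else if G.Adj x z then (1 - p) / (deg G x : ℝ) else 0

/-- The Wasserstein distance `W₁(μ₁, μ₂)` with respect to the combinatorial distance of `G`:
the infimum of the total transport cost over all transport plans from `μ₁` to `μ₂`. -/
def W1 {V : Type*} [Fintype V] (G : SimpleGraph V) (μ₁ μ₂ : V → ℝ) : ℝ :=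
  sInf {c : ℝ | ∃ π : V → V → ℝ,
    (∀ x y, 0 ≤ π x y ∧ π x y ≤ 1) ∧
    (∀ x, ∑ y, π x y = μ₁ x) ∧
    (∀ y, ∑ x, π x y = μ₂ y) ∧
    c = ∑ x, ∑ y, (G.dist x y : ℝ) * π x y}

/-- The `p`-Ollivier-Ricci curvature `κ_p(x,y) = 1 - W₁(μ_x^p, μ_y^p)`. -/
def kappa {V : Type*} [Fintype V] (G : SimpleGraph V) (p : ℝ) (x y : V) : ℝ :=
  1 - W1 G (mu G p x) (mu G p y)

/-- The Lin-Lu-Yau curvature `κ_LLY(x,y) = lim_{p→1} κ_p(x,y)/(1-p)`. -/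
def kappaLLY {V : Type*} [Fintype V] (G : SimpleGraph V) (x y : V) : ℝ :=
  Filter.limUnder (nhdsWithin 1 (Set.Iio 1)) (fun p => kappa G p x y / (1 - p))

/-- `G` is Bonnet-Myers sharp if the infimum of `κ_LLY` over the edges equals `2/diam(G)`. -/
def BMSharp {V : Type*} [Fintype V] (G : SimpleGraph V) : Prop :=
  sInf {r : ℝ | ∃ x y, G.Adj x y ∧ r = kappaLLY G x y} = 2 / (diam G : ℝ)

/-- `G` is obtained from the complete graph on its vertex set by deleting a matching
(a set of pairwise disjoint edges, encoded as a symmetric irreflexive relation in which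
every vertex has at most one partner). -/
def IsMatchingDeletionOfComplete {V : Type*} (G : SimpleGraph V) : Prop :=
  ∃ M : V → V → Prop, Symmetric M ∧ (∀ x, ¬ M x x) ∧
    (∀ x y z, M x y → M x z → y = z) ∧
    (∀ x y, G.Adj x y ↔ x ≠ y ∧ ¬ M x y)

/-- The graph `G(a,b)` on `2a+b` vertices `u_1, …, u_{2a}, v_1, …, v_b` (encoded as
`Fin (2a+b)`, with `u_i` the index `i-1` and `v_j` the index `2a+j-1`), in which two distinct
vertices are adjacent unless they form a pair `{u_{2i-1}, u_{2i}}`, i.e. `G(a,b)` is the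
complete graph `K_{2a+b}` with a matching of size `a` deleted. -/
def Gab (a b : ℕ) : SimpleGraph (Fin (2*a+b)) where
  Adj x y := x ≠ y ∧ ¬((x : ℕ) < 2*a ∧ (y : ℕ) < 2*a ∧ (x : ℕ)/2 = (y : ℕ)/2)
  symm := by
    constructor
    intro x y h
    exact ⟨h.1.symm, fun hc => h.2 ⟨hc.2.1, hc.1, hc.2.2.symm⟩⟩
  loopless := by constructor; intro x h; exact h.1 rfl

/-- The antitree `AT(a_1, …, a_N)` on the disjoint union of sets `V_1, …, V_N` with
`|V_k| = a_k` (0-indexed here: `V_k` is `Fin (a k)` for `k : Fin N`): two distinct vertices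
are adjacent iff they lie in the same set or in consecutive sets. -/
def antitree (N : ℕ) (a : Fin N → ℕ) : SimpleGraph (Σ k : Fin N, Fin (a k)) where
  Adj x y := x ≠ y ∧
    ((x.1 : ℕ) = (y.1 : ℕ) ∨ (x.1 : ℕ) + 1 = (y.1 : ℕ) ∨ (y.1 : ℕ) + 1 = (x.1 : ℕ))
  symm := by
    constructor
    intro x y h
    refine ⟨h.1.symm, ?_⟩
    rcases h.2 with h2 | h2 | h2
    · exact Or.inl h2.symm
    · exact Or.inr (Or.inr h2)
    · exact Or.inr (Or.inl h2)
  loopless := by constructor; intro x h; exact h.1 rfl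

/-!
The quotient `κ_p / (1 - p)` is a slope at `p = 1` of the convex function `p ↦ W₁(μ_a^p, μ_b^p)`, so
it increases to the limit `κ_LLY`. Testing the Wasserstein distance against a `1`-Lipschitz function
`f` with `f b = f a + 1` gives `κ_LLY(a, b) ≤ Δf(a) - Δf(b)`, where `Δ` is the random walk
Laplacian. So if `κ_LLY ≥ 1` on every edge, then `Δ d(c, ·)` is at most `1` at `c` and drops by at
least `1` with each step away from `c`. Since `Δf ≥ -1` for every `1`-Lipschitz `f`, the diameter is
at most `2`; at a vertex `v` with `d(c, v) = 2` the bound is attained, hence every neighbour of `v`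
is adjacent to `c`.

Thus vertices at distance `2` have the same neighbours. If `z ≠ w` were both at distance `2` from
`x`, a common neighbour `y` of the three would satisfy `Δ d(x, ·) (y) > 0`, which the descent
excludes. The graph is therefore complete up to a matching: every degree is `|V| - 1` or `|V| - 2`,
and `d_x < d_y` leaves only one possibility for each of them.
-/

section CurvatureBounds

variable {V : Type*} {G : SimpleGraph V}

section Distance

variable {f : V → ℝ} {c v w : V}

theorem exists_adj_dist_eq {n : ℕ} (h : G.dist c v = n + 1) :
    ∃ u, G.Adj u v ∧ G.dist c u = n := by
  rw [SimpleGraph.dist_comm] at h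
  obtain ⟨p, hp⟩ := SimpleGraph.exists_walk_of_dist_ne_zero (h.trans_ne n.succ_ne_zero)
  cases p with
  | nil => simp at h
  | @cons _ u _ hvu q =>
    rw [SimpleGraph.Walk.length_cons, h] at hp
    have hle : G.dist u c ≤ n := (SimpleGraph.dist_le q).trans_eq (by lia)
    have := hvu.diff_dist_adj (u := c)
    rw [SimpleGraph.dist_comm] at h hle
    exact ⟨u, hvu.symm, by lia⟩

/-- The functions that are `1`-Lipschitz for the graph distance: the test functions of Kantorovich
duality. -/
def IsOneLipschitz (G : SimpleGraph V) (f : V → ℝ) : Prop :=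
  ∀ u v, f v - f u ≤ G.dist u v

theorem isOneLipschitz_dist (hconn : G.Connected) (c : V) :
    IsOneLipschitz G fun v => G.dist c v := by
  intro u v
  have htri : G.dist c v ≤ G.dist c u + G.dist u v := hconn.dist_triangle
  simp only [sub_le_iff_le_add']
  exact_mod_cast htri

theorem IsOneLipschitz.abs_sub_le_one (hf : IsOneLipschitz G f) (h : G.Adj v w) :
    |f w - f v| ≤ 1 := by
  have hvw := hf v w
  have hwv := hf w v
  rw [SimpleGraph.dist_eq_one_iff_adj.2 h] at hvw
  rw [SimpleGraph.dist_eq_one_iff_adj.2 h.symm] at hwv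
  rw [abs_le]
  push_cast at hvw hwv
  constructor <;> linarith

end Distance

variable [Fintype V]

section Transport

variable {μ ν : V → ℝ} {π : V → V → ℝ}

/-- A transport plan (coupling) from `μ` to `ν`, exactly as in the definition of `W1`. -/
structure IsTransportPlan (μ ν : V → ℝ) (π : V → V → ℝ) : Prop where
  mem_Icc : ∀ x y, 0 ≤ π x y ∧ π x y ≤ 1
  sum_right : ∀ x, ∑ y, π x y = μ x
  sum_left : ∀ y, ∑ x, π x y = ν y

/-- The cost of moving mass according to `π`, at the price of the graph distance; `W1` is its
infimum over transport plans. -/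
def transportCost (G : SimpleGraph V) (π : V → V → ℝ) : ℝ :=
  ∑ x, ∑ y, (G.dist x y : ℝ) * π x y

theorem isTransportPlan_mul (hμ : μ ∈ stdSimplex ℝ V) (hν : ν ∈ stdSimplex ℝ V) :
    IsTransportPlan μ ν fun x y => μ x * ν y where
  mem_Icc x y := by
    have hμx := mem_Icc_of_mem_stdSimplex hμ x
    have hνy := mem_Icc_of_mem_stdSimplex hν y
    exact ⟨mul_nonneg hμx.1 hνy.1, mul_le_one₀ hμx.2 hνy.1 hνy.2⟩
  sum_right x := by rw [← mul_sum, hν.2, mul_one]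
  sum_left y := by rw [← sum_mul, hμ.2, one_mul]

theorem IsTransportPlan.convexComb {μ' ν' : V → ℝ} {π' : V → V → ℝ} {s t : ℝ}
    (hπ : IsTransportPlan μ ν π) (hπ' : IsTransportPlan μ' ν' π')
    (hs : 0 ≤ s) (ht : 0 ≤ t) (hst : s + t = 1) :
    IsTransportPlan (s • μ + t • μ') (s • ν + t • ν') (s • π + t • π') where
  mem_Icc x y := convex_Icc (0 : ℝ) 1 (hπ.mem_Icc x y) (hπ'.mem_Icc x y) hs ht hst
  sum_right x := by
    simp [sum_add_distrib, ← mul_sum, hπ.sum_right, hπ'.sum_right]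
  sum_left y := by
    simp [sum_add_distrib, ← mul_sum, hπ.sum_left, hπ'.sum_left]

theorem isTransportPlan_single (a b : V) :
    IsTransportPlan (Pi.single a (1 : ℝ)) (Pi.single b 1) (Pi.single a (Pi.single b 1)) where
  mem_Icc x y := by
    by_cases hx : x = a <;> by_cases hy : y = b <;> simp [hx, hy]
  sum_right x := by by_cases hx : x = a <;> simp [hx]
  sum_left y := by simp [← Finset.sum_apply]

theorem transportCost_nonneg (hπ : IsTransportPlan μ ν π) : 0 ≤ transportCost G π :=
  sum_nonneg fun x _ => sum_nonneg fun y _ => mul_nonneg (Nat.cast_nonneg _) (hπ.mem_Icc x y).1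

theorem transportCost_smul_add_smul (π π' : V → V → ℝ) (s t : ℝ) :
    transportCost G (s • π + t • π') = s * transportCost G π + t * transportCost G π' := by
  simp only [transportCost, mul_sum, ← sum_add_distrib, Pi.add_apply, Pi.smul_apply, smul_eq_mul]
  refine sum_congr rfl fun x _ => sum_congr rfl fun y _ => ?_
  ring

theorem transportCost_single (a b : V) :
    transportCost G (Pi.single a (Pi.single b 1)) = G.dist a b := by
  rw [transportCost, Fintype.sum_eq_single a fun x hx => by simp [hx],
    Fintype.sum_eq_single b fun y hy => by simp [hy]]
  simp

theorem W1_le_transportCost (hπ : IsTransportPlan μ ν π) : W1 G μ ν ≤ transportCost G π := by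
  refine csInf_le ⟨0, ?_⟩ ⟨π, hπ.mem_Icc, hπ.sum_right, hπ.sum_left, rfl⟩
  rintro _ ⟨ρ, h₁, h₂, h₃, rfl⟩
  exact transportCost_nonneg ⟨h₁, h₂, h₃⟩

theorem exists_transportCost_lt (hμ : μ ∈ stdSimplex ℝ V) (hν : ν ∈ stdSimplex ℝ V) {c : ℝ}
    (hc : W1 G μ ν < c) : ∃ π, IsTransportPlan μ ν π ∧ transportCost G π < c := by
  have hμν := isTransportPlan_mul hμ hν
  obtain ⟨_, ⟨π, h₁, h₂, h₃, rfl⟩, hπc⟩ :=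
    exists_lt_of_csInf_lt (by exact ⟨_, _, hμν.mem_Icc, hμν.sum_right, hμν.sum_left, rfl⟩) hc
  exact ⟨π, ⟨h₁, h₂, h₃⟩, hπc⟩

theorem convexOn_W1 (G : SimpleGraph V) :
    ConvexOn ℝ (stdSimplex ℝ V ×ˢ stdSimplex ℝ V) fun m => W1 G m.1 m.2 := by
  refine ⟨(convex_stdSimplex ℝ V).prod (convex_stdSimplex ℝ V), ?_⟩
  rintro ⟨μ, ν⟩ ⟨hμ, hν⟩ ⟨μ', ν'⟩ ⟨hμ', hν'⟩ s t hs ht hst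
  refine le_of_forall_pos_le_add fun ε hε => ?_
  obtain ⟨π, hπ, hcost⟩ := exists_transportCost_lt hμ hν (lt_add_of_pos_right (W1 G μ ν) hε)
  obtain ⟨π', hπ', hcost'⟩ :=
    exists_transportCost_lt hμ' hν' (lt_add_of_pos_right (W1 G μ' ν') hε)
  calc W1 G (s • μ + t • μ') (s • ν + t • ν')
      ≤ s * transportCost G π + t * transportCost G π' := by
        rw [← transportCost_smul_add_smul]
        exact W1_le_transportCost (hπ.convexComb hπ' hs ht hst)
    _ ≤ s * (W1 G μ ν + ε) + t * (W1 G μ' ν' + ε) := by gcongr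
    _ = s * W1 G μ ν + t * W1 G μ' ν' + ε := by linear_combination ε * hst

theorem IsOneLipschitz.sum_sub_sum_le_transportCost {f : V → ℝ} (hf : IsOneLipschitz G f)
    (hπ : IsTransportPlan μ ν π) :
    ∑ v, f v * ν v - ∑ v, f v * μ v ≤ transportCost G π := by
  calc ∑ v, f v * ν v - ∑ v, f v * μ v
      = ∑ y, ∑ x, f y * π x y - ∑ x, ∑ y, f x * π x y := by
        simp only [← mul_sum, hπ.sum_right, hπ.sum_left]
    _ = ∑ x, ∑ y, (f y - f x) * π x y := by
        rw [sum_comm]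
        simp only [← sum_sub_distrib, ← sub_mul]
    _ ≤ transportCost G π :=
        sum_le_sum fun x _ => sum_le_sum fun y _ =>
          mul_le_mul_of_nonneg_right (hf x y) (hπ.mem_Icc x y).1

theorem IsOneLipschitz.sum_sub_sum_le_W1 {f : V → ℝ} (hf : IsOneLipschitz G f)
    (hμ : μ ∈ stdSimplex ℝ V) (hν : ν ∈ stdSimplex ℝ V) :
    ∑ v, f v * ν v - ∑ v, f v * μ v ≤ W1 G μ ν := by
  by_contra! hlt
  obtain ⟨π, hπ, hcost⟩ := exists_transportCost_lt hμ hν hlt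
  exact hcost.not_ge (hf.sum_sub_sum_le_transportCost hπ)

theorem W1_single_single (hconn : G.Connected) (a b : V) :
    W1 G (Pi.single a 1) (Pi.single b 1) = G.dist a b := by
  refine le_antisymm ?_ ?_
  · rw [← transportCost_single]
    exact W1_le_transportCost (isTransportPlan_single a b)
  · simpa [Pi.single_apply] using (isOneLipschitz_dist hconn a).sum_sub_sum_le_W1
      (single_mem_stdSimplex ℝ a) (single_mem_stdSimplex ℝ b)

end Transport

section RandomWalk

variable {x y : V}

theorem deg_pos_of_adj (h : G.Adj x y) : 0 < deg G x :=
  card_pos.mpr ⟨y, by simpa using h⟩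

/-- The Laplacian of the simple random walk, `Δf(x) = (1/d_x) ∑_{v ∼ x} (f(v) - f(x))`; it is `0`
at isolated vertices. -/
def walkLaplacian (G : SimpleGraph V) (f : V → ℝ) (x : V) : ℝ :=
  (∑ v with G.Adj x v, (f v - f x)) / deg G x

theorem sum_mul_mu (hx : 0 < deg G x) (f : V → ℝ) (p : ℝ) :
    ∑ v, f v * mu G p x v = f x + (1 - p) * walkLaplacian G f x := by
  have hsplit (v : V) : f v * mu G p x v =
      (if v = x then p * f v else 0) + if G.Adj x v then (1 - p) / deg G x * f v else 0 := by
    by_cases hvx : v = x <;> simp [mu, hvx, mul_comm]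
  have hdeg : (#{v | G.Adj x v} : ℝ) = deg G x := rfl
  simp only [hsplit, sum_add_distrib, sum_ite_eq', mem_univ, if_true, ← sum_filter, ← mul_sum,
    walkLaplacian, sum_sub_distrib, sum_const, nsmul_eq_mul, hdeg]
  field_simp
  ring

theorem mu_mem_stdSimplex (hx : 0 < deg G x) {p : ℝ} (hp : p ∈ Set.Icc 0 1) :
    mu G p x ∈ stdSimplex ℝ V := by
  refine ⟨fun v => ?_, ?_⟩
  · have : 0 ≤ 1 - p := sub_nonneg.2 hp.2
    have : 0 ≤ p := hp.1
    unfold mu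
    split_ifs <;> positivity
  · simpa [walkLaplacian] using sum_mul_mu hx (fun _ => 1) p

theorem mu_one (x : V) : mu G 1 x = Pi.single x 1 := by
  ext v
  simp [mu, Pi.single_apply]

theorem mu_convexComb {s t : ℝ} (hst : s + t = 1) (p q : ℝ) (x : V) :
    mu G (s * p + t * q) x = s • mu G p x + t • mu G q x := by
  ext v
  simp only [mu, Pi.add_apply, Pi.smul_apply, smul_eq_mul]
  split_ifs
  · rfl
  · linear_combination -(1 / (deg G x : ℝ)) * hst
  · ring

theorem convexOn_W1_mu (hx : 0 < deg G x) (hy : 0 < deg G y) :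
    ConvexOn ℝ (Set.Icc 0 1) fun p => W1 G (mu G p x) (mu G p y) := by
  refine ⟨convex_Icc 0 1, fun p hp q hq s t hs ht hst => ?_⟩
  simp only [smul_eq_mul, mu_convexComb hst]
  have hmem {r : ℝ} (hr : r ∈ Set.Icc 0 1) :
      (mu G r x, mu G r y) ∈ stdSimplex ℝ V ×ˢ stdSimplex ℝ V :=
    ⟨mu_mem_stdSimplex hx hr, mu_mem_stdSimplex hy hr⟩
  exact (convexOn_W1 G).2 (hmem hp) (hmem hq) hs ht hst

end RandomWalk

section Curvature

open Filter Topology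

variable {a b : V}

theorem kappa_div_one_sub_eq_slope (hconn : G.Connected) (h : G.Adj a b) (p : ℝ) :
    kappa G p a b / (1 - p) = slope (fun q => W1 G (mu G q a) (mu G q b)) 1 p := by
  rw [slope_def_field, mu_one, mu_one, W1_single_single hconn,
    SimpleGraph.dist_eq_one_iff_adj.2 h, kappa, ← neg_div_neg_eq, neg_sub, neg_sub, Nat.cast_one]

theorem monotoneOn_kappa_div_one_sub (hconn : G.Connected) (h : G.Adj a b) :
    MonotoneOn (fun p => kappa G p a b / (1 - p)) (Set.Ioo 0 1) := by
  simp only [kappa_div_one_sub_eq_slope hconn h]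
  exact ((convexOn_W1_mu (deg_pos_of_adj h) (deg_pos_of_adj h.symm)).slope_mono
    (Set.right_mem_Icc.2 zero_le_one)).mono fun p hp => ⟨⟨hp.1.le, hp.2.le⟩, hp.2.ne⟩

theorem kappa_div_one_sub_le (h : G.Adj a b) {f : V → ℝ} (hf : IsOneLipschitz G f)
    (hab : f b = f a + 1) {p : ℝ} (hp : p ∈ Set.Ioo 0 1) :
    kappa G p a b / (1 - p) ≤ walkLaplacian G f a - walkLaplacian G f b := by
  have hp' : p ∈ Set.Icc 0 1 := Set.Ioo_subset_Icc_self hp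
  have ha := deg_pos_of_adj h
  have hb := deg_pos_of_adj h.symm
  have hdual := hf.sum_sub_sum_le_W1 (mu_mem_stdSimplex ha hp') (mu_mem_stdSimplex hb hp')
  rw [sum_mul_mu ha, sum_mul_mu hb] at hdual
  rw [div_le_iff₀ (sub_pos.2 hp.2), kappa]
  linarith

theorem tendsto_kappa_div_one_sub (hconn : G.Connected) (h : G.Adj a b) :
    Tendsto (fun p => kappa G p a b / (1 - p)) (𝓝[<] 1) (𝓝 (kappaLLY G a b)) := by
  have hbdd : BddAbove ((fun p => kappa G p a b / (1 - p)) '' Set.Ioo 0 1) := by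
    refine ⟨_, Set.forall_mem_image.2 fun p hp =>
      kappa_div_one_sub_le h (isOneLipschitz_dist hconn a) ?_ hp⟩
    simp [SimpleGraph.dist_eq_one_iff_adj.2 h]
  exact tendsto_nhds_limUnder ⟨_, (monotoneOn_kappa_div_one_sub hconn h).tendsto_nhdsWithin_Ioo_left
    (Set.nonempty_Ioo.2 one_pos) hbdd⟩

theorem kappaLLY_le (hconn : G.Connected) (h : G.Adj a b) {f : V → ℝ} (hf : IsOneLipschitz G f)
    (hab : f b = f a + 1) :
    kappaLLY G a b ≤ walkLaplacian G f a - walkLaplacian G f b := by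
  refine le_of_tendsto (tendsto_kappa_div_one_sub hconn h) ?_
  filter_upwards [Ioo_mem_nhdsLT one_pos] with p hp
  exact kappa_div_one_sub_le h hf hab hp

/-- The edge-wise curvature bound `κ_LLY ≥ K`, the graph analogue of `Ric ≥ K`. -/
def HasCurvatureGE (G : SimpleGraph V) (K : ℝ) : Prop :=
  ∀ ⦃a b⦄, G.Adj a b → K ≤ kappaLLY G a b

theorem BMSharp.hasCurvatureGE (hBM : BMSharp G) : HasCurvatureGE G (2 / diam G) := by
  intro a b h
  rw [← hBM]
  refine csInf_le (Set.Finite.bddBelow ?_) ⟨a, b, h, rfl⟩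
  refine (Set.finite_range fun e : V × V => kappaLLY G e.1 e.2).subset ?_
  rintro _ ⟨u, v, -, rfl⟩
  exact ⟨(u, v), rfl⟩

end Curvature

section BonnetMyers

variable {f : V → ℝ} {c v w : V} {K : ℝ}

theorem IsOneLipschitz.abs_walkLaplacian_le_one (hf : IsOneLipschitz G f) (v : V) :
    |walkLaplacian G f v| ≤ 1 := by
  rw [walkLaplacian, abs_div, Nat.abs_cast]
  refine div_le_one_of_le₀ ((abs_sum_le_sum_abs _ _).trans ?_) (Nat.cast_nonneg _)
  simpa [deg] using sum_le_card_nsmul _ _ 1 fun w hw =>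
    hf.abs_sub_le_one (mem_filter.1 hw).2

theorem IsOneLipschitz.eq_sub_one_of_walkLaplacian_le (hf : IsOneLipschitz G f)
    (hv : walkLaplacian G f v ≤ -1) (h : G.Adj v w) : f w = f v - 1 := by
  have hnonneg : ∀ u ∈ ({u | G.Adj v u} : Finset V), 0 ≤ f u - f v + 1 := fun u hu => by
    linarith [(abs_le.1 (hf.abs_sub_le_one (mem_filter.1 hu).2)).1]
  have hsum : ∑ u with G.Adj v u, (f u - f v + 1) ≤ 0 := by
    rw [walkLaplacian, div_le_iff₀ (Nat.cast_pos.2 (deg_pos_of_adj h))] at hv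
    rw [sum_add_distrib, sum_const, nsmul_eq_mul, mul_one, ← deg]
    linarith
  have hzero := (sum_eq_zero_iff_of_nonneg hnonneg).1 (hsum.antisymm (sum_nonneg hnonneg)) w
    (by simpa using h)
  linarith

theorem HasCurvatureGE.walkLaplacian_dist_le (hK : HasCurvatureGE G K) (hconn : G.Connected)
    (c v : V) :
    walkLaplacian G (fun u => (G.dist c u : ℝ)) v ≤ 1 - K * G.dist c v := by
  have hLip := isOneLipschitz_dist hconn c
  induction hn : G.dist c v generalizing v with
  | zero => simpa using (abs_le.1 (hLip.abs_walkLaplacian_le_one v)).2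
  | succ n ih =>
    obtain ⟨u, huv, hu⟩ := exists_adj_dist_eq hn
    have hcurv := (hK huv).trans (kappaLLY_le hconn huv hLip (by simp [hn, hu]))
    have := ih u hu
    push_cast
    linarith

theorem HasCurvatureGE.mul_dist_le_two (hK : HasCurvatureGE G K) (hconn : G.Connected) (c v : V) :
    K * G.dist c v ≤ 2 := by
  have hupper := hK.walkLaplacian_dist_le hconn c v
  have hlower := (abs_le.1 ((isOneLipschitz_dist hconn c).abs_walkLaplacian_le_one v)).1
  linarith

theorem HasCurvatureGE.dist_add_one_eq_of_mul_dist_eq_two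
    (hK : HasCurvatureGE G K) (hconn : G.Connected) (hcv : K * G.dist c v = 2) (h : G.Adj v w) :
    G.dist c w + 1 = G.dist c v := by
  have hΔ := hK.walkLaplacian_dist_le hconn c v
  have := (isOneLipschitz_dist hconn c).eq_sub_one_of_walkLaplacian_le (by linarith) h
  rw [eq_sub_iff_add_eq] at this
  exact_mod_cast this

end BonnetMyers

section CurvatureAtLeastOne

variable {w x z : V}

theorem HasCurvatureGE.dist_le_two (hκ : HasCurvatureGE G 1) (hconn : G.Connected) (x y : V) :
    G.dist x y ≤ 2 := by
  have hmul := hκ.mul_dist_le_two hconn x y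
  rw [one_mul] at hmul
  exact_mod_cast hmul

theorem HasCurvatureGE.adj_iff_of_dist_eq_two (hκ : HasCurvatureGE G 1) (hconn : G.Connected)
    (h : G.dist x z = 2) (w : V) :
    G.Adj x w ↔ G.Adj z w := by
  have hsub {u v : V} (huv : G.dist u v = 2) (hv : G.Adj v w) : G.Adj u w := by
    have := hκ.dist_add_one_eq_of_mul_dist_eq_two hconn (c := u) (by simp [huv]) hv
    exact SimpleGraph.dist_eq_one_iff_adj.1 (by lia)
  exact ⟨hsub (SimpleGraph.dist_comm.trans h), hsub h⟩

theorem HasCurvatureGE.deg_eq_of_dist_eq_two (hκ : HasCurvatureGE G 1) (hconn : G.Connected)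
    (h : G.dist x z = 2) : deg G z = deg G x := by
  simp only [deg, hκ.adj_iff_of_dist_eq_two hconn h]

theorem HasCurvatureGE.eq_of_dist_eq_two (hκ : HasCurvatureGE G 1) (hconn : G.Connected)
    (hz : G.dist x z = 2) (hw : G.dist x w = 2) : z = w := by
  obtain ⟨y, hyz, hxy⟩ := exists_adj_dist_eq hz
  have hxy : G.Adj x y := SimpleGraph.dist_eq_one_iff_adj.1 hxy
  have hyw : G.Adj y w := ((hκ.adj_iff_of_dist_eq_two hconn hw y).1 hxy).symm
  by_contra hzw
  have hΔ : ∑ v with G.Adj y v, ((G.dist x v : ℝ) - 1) ≤ 0 := by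
    have := hκ.walkLaplacian_dist_le hconn x y
    rw [walkLaplacian, div_le_iff₀ (Nat.cast_pos.2 (deg_pos_of_adj hyz)),
      SimpleGraph.dist_eq_one_iff_adj.2 hxy] at this
    simpa using this
  have hsub : ({x, z, w} : Finset V) ⊆ ({v | G.Adj y v} : Finset V) := by
    simp [insert_subset_iff, hxy.symm, hyz, hyw]
  have hle : ∑ v ∈ {x, z, w}, ((G.dist x v : ℝ) - 1) ≤
      ∑ v with G.Adj y v, ((G.dist x v : ℝ) - 1) := by
    refine sum_le_sum_of_subset_of_nonneg hsub fun v _ hv => sub_nonneg.2 ?_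
    have hvx : x ≠ v := fun h => hv (by simp [h])
    exact_mod_cast hconn.pos_dist_of_ne hvx
  have hxz : x ≠ z := by rintro rfl; simp at hz
  have hxw : x ≠ w := by rintro rfl; simp at hw
  rw [sum_insert (by simp [hxz, hxw]), sum_pair hzw, hz, hw, SimpleGraph.dist_self] at hle
  push_cast at hle
  linarith

theorem HasCurvatureGE.card_dist_eq_two_le_one (hκ : HasCurvatureGE G 1) (hconn : G.Connected)
    (x : V) : #{z | G.dist x z = 2} ≤ 1 :=
  card_le_one.2 fun _ hz _ hw =>
    hκ.eq_of_dist_eq_two hconn (mem_filter.1 hz).2 (mem_filter.1 hw).2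

theorem deg_add_card_dist_eq_two_add_one (hconn : G.Connected) (hdist : ∀ v, G.dist x v ≤ 2) :
    deg G x + #{z | G.dist x z = 2} + 1 = Fintype.card V := by
  have hne : #{v | v ≠ x} + 1 = Fintype.card V := by
    rw [filter_ne', card_erase_add_one (mem_univ x), card_univ]
  have hsplit : ({v | v ≠ x} : Finset V) =
      ({v | G.Adj x v} : Finset V) ∪ ({z | G.dist x z = 2} : Finset V) := by
    ext v
    have := hdist v
    have := hconn.dist_eq_zero_iff (u := x) (v := v)
    have := SimpleGraph.dist_eq_one_iff_adj (G := G) (u := x) (v := v)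
    simp only [mem_filter, mem_univ, true_and, mem_union]
    grind
  rw [← hne, hsplit, card_union_of_disjoint, deg]
  refine disjoint_filter.2 fun v _ hv => ?_
  simp [SimpleGraph.dist_eq_one_iff_adj.2 hv]

end CurvatureAtLeastOne

theorem stmt9_general (hκ : HasCurvatureGE G 1) (hconn : G.Connected) {x y : V}
    (hdeg : deg G x < deg G y) :
    deg G y = deg G x + 1 ∧
    (∃! z : V, G.dist x z = 2) ∧
    (∀ z : V, G.dist x z = 2 → deg G z = deg G x) ∧
    Fintype.card V = deg G x + 2 ∧
    (∀ w : V, w ≠ y → G.Adj y w) := by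
  have hcount (u : V) := deg_add_card_dist_eq_two_add_one hconn (hκ.dist_le_two hconn u)
  have hx := hcount x
  have hy := hcount y
  have hx_le := hκ.card_dist_eq_two_le_one hconn x
  have hx_one : #{z | G.dist x z = 2} = 1 := by lia
  have hy_zero : #{w | G.dist y w = 2} = 0 := by lia
  refine ⟨by lia, ?_, fun z => hκ.deg_eq_of_dist_eq_two hconn, by lia, fun w hw => ?_⟩
  · exact (Fintype.existsUnique_iff_card_one _).2 hx_one
  · have hne_two : G.dist y w ≠ 2 :=
      filter_eq_empty_iff.1 (card_eq_zero.1 hy_zero) (mem_univ w)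
    have := hκ.dist_le_two hconn y w
    have := hconn.pos_dist_of_ne hw.symm
    exact SimpleGraph.dist_eq_one_iff_adj.1 (by lia)

end CurvatureBounds

/-- In a Bonnet-Myers sharp graph of diameter 2, if `x ∼ y` and `d_x < d_y`, then
`d_y = d_x + 1`, `x` has exactly one vertex at distance 2, that vertex has degree `d_x`, the
graph has `d_x + 2` vertices, and `y` is adjacent to every other vertex. -/
theorem stmt9 {V : Type*} [Fintype V] (G : SimpleGraph V) (hconn : G.Connected)
    (hdiam : diam G = 2) (hBM : BMSharp G) (x y : V) (hxy : G.Adj x y)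
    (hdeg : deg G x < deg G y) :
    deg G y = deg G x + 1 ∧
    (∃! z : V, G.dist x z = 2) ∧
    (∀ z : V, G.dist x z = 2 → deg G z = deg G x) ∧
    Fintype.card V = deg G x + 2 ∧
    (∀ w : V, w ≠ y → G.Adj y w) := by
  exact stmt9_general (by simpa [hdiam] using hBM.hasCurvatureGE) hconn hdeg
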